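/- Let R_{i−1} be a matrix with rows indexed by V(Y) and let M = {m_{ab}} be a fractional matching supported on pairs (a,b) with a ∈ S, b ∈ S' for disjoint S, S' ⊆ V(Y). Let M* be M extended with self-loops so that Σ_b m*_{ab} = 1 for all a, and define R_i[a] = (1/2)R_{i−1}[a] + (1/2)Σ_b m*_{ab} R_{i−1}[b]. Then Π(i−1) − Π(i) ≥ Σ_{a∈S} Σ_{b∈S'} (m_{ab}/2)·‖R_{i−1}[a] − R_{i−1}[b]‖², where Π(j) = Σ_{y} ‖R_j[y] − (1/|Y|)𝟙‖². -/

import Mathlib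

open Finset

/-!
Subtracting a constant from a column commutes with the averaging step, because the rows of `M*`
sum to `1`, so each centred column `x` is replaced by `(x + M* x) / 2`, whose entry at `a` is the
`m*_{a·}`-weighted mean of the numbers `(x a + x b) / 2`.  Jensen's inequality for the square
bounds its square by the weighted mean of the squares, and the parallelogram identity
`((x a + x b) / 2)² = (x a² + x b²) / 2 - (x a - x b)² / 4`, together with the symmetry of `M*`,
shows that the potential drops by at least `¼ ∑_{a,b} m*_{ab} (x a - x b)²`
(`sum_sq_lazy_average_le`).  Self-loops contribute nothing to this sum, and since `S` and `S'` are
disjoint it counts every pair in `S × S'` once in each order (`two_mul_sum_cross_le`), which turns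
`¼` into `½`.
-/

/-- One lazy averaging step with a symmetric stochastic matrix decreases the squared norm by at
least a quarter of its Dirichlet form. -/
lemma sum_sq_lazy_average_le {ι : Type*} [Fintype ι] (P : ι → ι → ℝ)
    (hP : ∀ a b, 0 ≤ P a b) (hsymm : ∀ a b, P a b = P b a) (hsum : ∀ a, ∑ b, P a b = 1)
    (x : ι → ℝ) :
    ∑ a, ((1 / 2) * x a + (1 / 2) * ∑ b, P a b * x b) ^ 2 ≤
      ∑ a, x a ^ 2 - (1 / 4) * ∑ a, ∑ b, P a b * (x a - x b) ^ 2 := by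
  have hjensen : ∀ a, ((1 / 2) * x a + (1 / 2) * ∑ b, P a b * x b) ^ 2 ≤
      ∑ b, P a b * ((x a + x b) / 2) ^ 2 := by
    intro a
    have hmean : (1 / 2) * x a + (1 / 2) * ∑ b, P a b * x b =
        ∑ b, P a b * ((x a + x b) / 2) := by
      have hconst : x a = ∑ b, P a b * x a := by rw [← Finset.sum_mul, hsum, one_mul]
      conv_lhs => rw [hconst]
      rw [Finset.mul_sum, Finset.mul_sum, ← Finset.sum_add_distrib]
      exact Finset.sum_congr rfl fun b _ => by ring
    rw [hmean]
    exact Real.pow_arith_mean_le_arith_mean_pow_of_even _ _ _ (fun b _ => hP a b) (hsum a) even_two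
  have hrow : ∑ a, ∑ b, P a b * x a ^ 2 = ∑ a, x a ^ 2 :=
    Finset.sum_congr rfl fun a _ => by rw [← Finset.sum_mul, hsum, one_mul]
  have hcol : ∑ a, ∑ b, P a b * x b ^ 2 = ∑ a, x a ^ 2 := by
    rw [Finset.sum_comm, ← hrow]
    exact Finset.sum_congr rfl fun a _ => Finset.sum_congr rfl fun b _ => by rw [hsymm]
  have hpar : ∑ a, ∑ b, P a b * ((x a + x b) / 2) ^ 2 =
      (1 / 2) * ∑ a, ∑ b, P a b * x a ^ 2 + (1 / 2) * ∑ a, ∑ b, P a b * x b ^ 2 -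
        (1 / 4) * ∑ a, ∑ b, P a b * (x a - x b) ^ 2 := by
    simp only [Finset.mul_sum, ← Finset.sum_add_distrib, ← Finset.sum_sub_distrib]
    exact Finset.sum_congr rfl fun a _ => Finset.sum_congr rfl fun b _ => by ring
  have := Finset.sum_le_sum fun a (_ : a ∈ Finset.univ) => hjensen a
  linarith

/-- For disjoint `S` and `S'`, the rectangles `S × S'` and `S' × S` are disjoint, so a nonnegative
symmetric function has at least twice its sum over `S × S'` in total. -/
lemma two_mul_sum_cross_le {ι : Type*} [Fintype ι] [DecidableEq ι] (f : ι → ι → ℝ)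
    (hf : ∀ a b, 0 ≤ f a b) (hsymm : ∀ a b, f a b = f b a) {S S' : Finset ι}
    (hdisj : Disjoint S S') :
    2 * ∑ a ∈ S, ∑ b ∈ S', f a b ≤ ∑ a, ∑ b, f a b := by
  have hswap : ∑ a ∈ S, ∑ b ∈ S', f a b = ∑ a ∈ S', ∑ b ∈ S, f a b := by
    rw [Finset.sum_comm]
    exact Finset.sum_congr rfl fun a _ => Finset.sum_congr rfl fun b _ => hsymm _ _
  calc 2 * ∑ a ∈ S, ∑ b ∈ S', f a b
      = ∑ a ∈ S, ∑ b ∈ S', f a b + ∑ a ∈ S', ∑ b ∈ S, f a b := by rw [← hswap]; ring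
    _ ≤ ∑ a ∈ S, ∑ b, f a b + ∑ a ∈ S', ∑ b, f a b :=
        add_le_add (Finset.sum_le_sum fun a _ => Finset.sum_le_univ_sum_of_nonneg (hf a))
          (Finset.sum_le_sum fun a _ => Finset.sum_le_univ_sum_of_nonneg (hf a))
    _ = ∑ a ∈ S ∪ S', ∑ b, f a b := (Finset.sum_union hdisj).symm
    _ ≤ ∑ a, ∑ b, f a b :=
        Finset.sum_le_univ_sum_of_nonneg fun a => Finset.sum_nonneg fun b _ => hf a b

/-- **potential decrease.** Let `R_{i−1}` have rows summing to `1`, and let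
`M = {m_{ab}}` be a fractional matching supported on pairs between disjoint sets `S, S'`.
With `M*` the extension of `M` by self-loops to a perfect fractional matching and
`R_i[a] = (1/2)R_{i−1}[a] + (1/2)Σ_b m*_{ab} R_{i−1}[b]`, the potential
`Π(j) = Σ_y ‖R_j[y] − (1/t)𝟙‖²` satisfies
`Π(i−1) − Π(i) ≥ Σ_{a∈S} Σ_{b∈S'} (m_{ab}/2)·‖R_{i−1}[a] − R_{i−1}[b]‖²`. -/
theorem potential_decrease (t : ℕ)
    (Rprev Rnext : Matrix (Fin t) (Fin t) ℝ)
    (S S' : Finset (Fin t)) (hdisj : Disjoint S S')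
    (m : Fin t → Fin t → ℝ)
    (hsymm : ∀ a b, m a b = m b a)
    (hrange : ∀ a b, 0 ≤ m a b ∧ m a b ≤ 1)
    (hdeg : ∀ a, ∑ b, m a b ≤ 1)
    (hsupp : ∀ a b, m a b ≠ 0 → (a ∈ S ∧ b ∈ S') ∨ (a ∈ S' ∧ b ∈ S))
    (hrow : ∀ a, ∑ j, Rprev a j = 1)
    (mstar : Fin t → Fin t → ℝ)
    (hmstar : ∀ a b, mstar a b =
      if a = b then 1 - ∑ c ∈ Finset.univ.erase a, m a c else m a b)
    (hRnext : ∀ a j, Rnext a j = (1 / 2) * Rprev a j + (1 / 2) * ∑ b, mstar a b * Rprev b j) :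
    ∑ a ∈ S, ∑ b ∈ S', (m a b / 2) * ∑ j, (Rprev a j - Rprev b j) ^ 2 ≤
      (∑ y, ∑ j, (Rprev y j - 1 / t) ^ 2) - (∑ y, ∑ j, (Rnext y j - 1 / t) ^ 2) := by
  have hstar_nonneg : ∀ a b, 0 ≤ mstar a b := by
    intro a b
    rw [hmstar]
    split_ifs
    · have := Finset.add_sum_erase _ (m a) (Finset.mem_univ a)
      linarith [hdeg a, (hrange a a).1]
    · exact (hrange a b).1
  have hstar_symm : ∀ a b, mstar a b = mstar b a := by
    intro a b
    rcases eq_or_ne a b with rfl | hab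
    · rfl
    · rw [hmstar, hmstar, if_neg hab, if_neg hab.symm, hsymm]
  have hstar_sum : ∀ a, ∑ b, mstar a b = 1 := by
    intro a
    have hoff : ∑ b ∈ Finset.univ.erase a, mstar a b = ∑ b ∈ Finset.univ.erase a, m a b :=
      Finset.sum_congr rfl fun b hb => by
        rw [hmstar a b, if_neg (Finset.ne_of_mem_erase hb).symm]
    rw [← Finset.add_sum_erase _ _ (Finset.mem_univ a), hoff, hmstar a a, if_pos rfl]
    ring
  -- Column by column; the self-loops and the centring both disappear from the Dirichlet form.
  have hcol : ∀ j, ∑ a ∈ S, ∑ b ∈ S', (m a b / 2) * (Rprev a j - Rprev b j) ^ 2 ≤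
      ∑ y, (Rprev y j - 1 / t) ^ 2 - ∑ y, (Rnext y j - 1 / t) ^ 2 := by
    intro j
    have hcenter : ∀ a, Rnext a j - 1 / t =
        (1 / 2) * (Rprev a j - 1 / t) + (1 / 2) * ∑ b, mstar a b * (Rprev b j - 1 / t) := by
      intro a
      simp only [mul_sub, Finset.sum_sub_distrib, ← Finset.sum_mul, hstar_sum, hRnext]
      ring
    have hlazy := sum_sq_lazy_average_le mstar hstar_nonneg hstar_symm hstar_sum
      fun a => Rprev a j - 1 / t
    have hloops : ∑ a, ∑ b, mstar a b * ((Rprev a j - 1 / t) - (Rprev b j - 1 / t)) ^ 2 =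
        ∑ a, ∑ b, m a b * (Rprev a j - Rprev b j) ^ 2 := by
      refine Finset.sum_congr rfl fun a _ => Finset.sum_congr rfl fun b _ => ?_
      rcases eq_or_ne a b with rfl | hab
      · ring
      · rw [hmstar, if_neg hab]
        ring
    have hcross := two_mul_sum_cross_le (fun a b => m a b * (Rprev a j - Rprev b j) ^ 2)
      (fun a b => mul_nonneg (hrange a b).1 (sq_nonneg _))
      (fun a b => by rw [hsymm a b]; ring) hdisj
    have hhalf : ∑ a ∈ S, ∑ b ∈ S', (m a b / 2) * (Rprev a j - Rprev b j) ^ 2 =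
        (1 / 2) * ∑ a ∈ S, ∑ b ∈ S', m a b * (Rprev a j - Rprev b j) ^ 2 := by
      simp only [Finset.mul_sum]
      exact Finset.sum_congr rfl fun a _ => Finset.sum_congr rfl fun b _ => by ring
    simp only [hcenter]
    rw [hloops] at hlazy
    linarith
  calc ∑ a ∈ S, ∑ b ∈ S', (m a b / 2) * ∑ j, (Rprev a j - Rprev b j) ^ 2
      = ∑ j, ∑ a ∈ S, ∑ b ∈ S', (m a b / 2) * (Rprev a j - Rprev b j) ^ 2 := by
        simp only [Finset.mul_sum]
        refine Eq.trans (Finset.sum_congr rfl fun a _ => Finset.sum_comm) Finset.sum_comm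
    _ ≤ ∑ j, (∑ y, (Rprev y j - 1 / t) ^ 2 - ∑ y, (Rnext y j - 1 / t) ^ 2) :=
        Finset.sum_le_sum fun j _ => hcol j
    _ = _ := by
        rw [Finset.sum_sub_distrib, Finset.sum_comm,
          Finset.sum_comm (f := fun j y => (Rnext y j - 1 / (t : ℝ)) ^ 2)]
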